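/- For every k ∈ ℕ and p,q ∈ [0,1], the percolation function of anisotropic bond percolation on the slab S^k satisfies θ^{S^k}(p,q) ≥ θ^{ℤ²}(p̄(p,q)), where θ^{ℤ²}(s) is the percolation probability of the origin in independent Bernoulli bond percolation on ℤ² with parameter s, and p̄(p,q) = p · (1 − [(1−p)q̂²]^{k+1}) / (1 − (1−p)q̂²) with q̂ = 1 − (1−q)^{1/4}. -/

import Mathlib

open MeasureTheory Set
open scoped ENNReal

namespace AnisoSlab

/-! ### A concrete construction of countable products of Bernoulli measures

The product Bernoulli measure on `ι → Bool` (each coordinate `i` open with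
probability `P i`, independently) is realized as the pushforward of Lebesgue
measure on `[0,1)`: the binary digits of a uniform sample are i.i.d. fair
coins; regrouping them along a pairing function yields countably many
independent uniform samples, and comparing the `i`-th sample with `P i`
yields the desired independent Bernoulli coordinates. -/

/-- The `n`-th binary digit of `x` (digits after the binary point). -/
noncomputable def binDigit (n : ℕ) (x : ℝ) : Bool :=
  decide (⌊x * 2 ^ (n + 1)⌋ % 2 = 1)

/-- Countably many independent uniform-`[0,1]` samples extracted from a single
uniform sample `x` on `[0,1)`, by regrouping its binary digits. -/
noncomputable def unifSample (i : ℕ) (x : ℝ) : ℝ :=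
  ∑' n : ℕ, if binDigit (Nat.pair i n) x then ((2 : ℝ) ^ (n + 1))⁻¹ else 0

/-- The product Bernoulli measure on `ι → Bool`, coordinate `i` being `true`
with probability `P i`, independently over `i`. -/
noncomputable def bernoulliProduct {ι : Type*} [Encodable ι] (P : ι → ℝ) :
    Measure (ι → Bool) :=
  Measure.map (fun x i => decide (unifSample (Encodable.encode i) x < P i))
    (volume.restrict (Set.Ico (0 : ℝ) 1))

/-! ### The slab `S^k` and anisotropic bond percolation on it -/

/-- Ambient vertices: `ℤ³`; the slab `S^k` uses those with third coordinate in `{0, …, k}`. -/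
abbrev Vtx : Type := ℤ × ℤ × ℤ

/-- The three unit coordinate vectors. -/
def dvec : Fin 3 → Vtx
  | 0 => (1, 0, 0)
  | 1 => (0, 1, 0)
  | 2 => (0, 0, 1)

/-- A bond is indexed by its lower endpoint `v` and a direction `i`; it joins
`v` to `v + dvec i`. Directions `0, 1` give radial (horizontal) bonds, and
direction `2` gives axial (vertical) bonds. -/
abbrev EdgeIdx : Type := Vtx × Fin 3

/-- A percolation configuration: each bond is open (`true`) or closed (`false`). -/
abbrev Config : Type := EdgeIdx → Bool

/-- `v` is a vertex of the slab `S^k`. -/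
def InSlab (k : ℕ) (v : Vtx) : Prop := 0 ≤ v.2.2 ∧ v.2.2 ≤ k

/-- `(v, i)` is a bond of the slab `S^k` (both endpoints lie in the slab). -/
def IsEdge (k : ℕ) (e : EdgeIdx) : Prop := InSlab k e.1 ∧ InSlab k (e.1 + dvec e.2)

/-- The measure `P_{p,q}` on configurations of `S^k`: each radial (horizontal)
bond is open with probability `p` and each axial (vertical) bond is open with
probability `q`, independently. -/
noncomputable def slabMeasure (k : ℕ) (p q : ℝ) : Measure Config :=
  bernoulliProduct (fun e => if e.2 = 2 then q else p)

/-- `x` and `y` are joined by an open bond of `S^k` in the configuration `ω`. -/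
def OpenAdj (k : ℕ) (ω : Config) (x y : Vtx) : Prop :=
  ∃ i : Fin 3,
    (y = x + dvec i ∧ IsEdge k (x, i) ∧ ω (x, i) = true) ∨
    (x = y + dvec i ∧ IsEdge k (y, i) ∧ ω (y, i) = true)

/-- The open cluster of the vertex `x` in the configuration `ω`. -/
def cluster (k : ℕ) (ω : Config) (x : Vtx) : Set Vtx :=
  {y | Relation.ReflTransGen (OpenAdj k ω) x y}

/-- The percolation function `θ(p,q) = P_{p,q}(0 ↔ ∞)`. -/
noncomputable def theta (k : ℕ) (p q : ℝ) : ℝ≥0∞ :=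
  slabMeasure k p q {ω | (cluster k ω 0).Infinite}

/-- `p_k = 1 - (1/2)^{1/(k+1)}`, the horizontal critical value at `q = 1`. -/
noncomputable def pCrit (k : ℕ) : ℝ := 1 - (1 / 2 : ℝ) ^ ((1 : ℝ) / (k + 1))

/-- The critical curve `q_c(p) = sup {q ∈ [0,1] : θ(p,q) = 0}`. -/
noncomputable def qc (k : ℕ) (p : ℝ) : ℝ :=
  sSup {q : ℝ | q ∈ Set.Icc (0 : ℝ) 1 ∧ theta k p q = 0}

/-- The critical curve `p_c(q) = sup {p ∈ [0,1] : θ(p,q) = 0}`. -/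
noncomputable def pc (k : ℕ) (q : ℝ) : ℝ :=
  sSup {p : ℝ | p ∈ Set.Icc (0 : ℝ) 1 ∧ theta k p q = 0}


/-- The two unit coordinate vectors of `ℤ²`. -/
def dvec2 : Fin 2 → ℤ × ℤ
  | 0 => (1, 0)
  | 1 => (0, 1)

/-- Bond configurations on `ℤ²`: the bond `(v, i)` joins `v` to `v + dvec2 i`. -/
abbrev ConfigZ2 : Type := (ℤ × ℤ) × Fin 2 → Bool

/-- Independent Bernoulli bond percolation on `ℤ²` with parameter `s`. -/
noncomputable def z2Measure (s : ℝ) : Measure ConfigZ2 :=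
  bernoulliProduct (fun _ => s)

/-- `x` and `y` are joined by an open bond of `ℤ²` in the configuration `ω`. -/
def OpenAdjZ2 (ω : ConfigZ2) (x y : ℤ × ℤ) : Prop :=
  ∃ i : Fin 2,
    (y = x + dvec2 i ∧ ω (x, i) = true) ∨ (x = y + dvec2 i ∧ ω (y, i) = true)

/-- The open cluster of `x` in bond percolation on `ℤ²`. -/
def clusterZ2 (ω : ConfigZ2) (x : ℤ × ℤ) : Set (ℤ × ℤ) :=
  {y | Relation.ReflTransGen (OpenAdjZ2 ω) x y}

/-- `θ^{ℤ²}(s)`: the probability that the origin lies in an infinite open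
cluster of Bernoulli bond percolation on `ℤ²` with parameter `s`. -/
noncomputable def thetaZ2 (s : ℝ) : ℝ≥0∞ :=
  z2Measure s {ω | (clusterZ2 ω 0).Infinite}

/-- `q̂ = 1 - (1-q)^{1/4}`. -/
noncomputable def qhat (q : ℝ) : ℝ := 1 - (1 - q) ^ ((1 : ℝ) / 4)

/-- `p̄(p,q) = p (1 - [(1-p) q̂²]^{k+1}) / (1 - (1-p) q̂²)`. -/
noncomputable def pbar (k : ℕ) (p q : ℝ) : ℝ :=
  p * (1 - ((1 - p) * qhat q ^ 2) ^ (k + 1)) / (1 - (1 - p) * qhat q ^ 2)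

/-! ### Step 1: binary digits are i.i.d. fair coins -/

theorem binDigit_step (m : ℤ) (n : ℕ) (x : ℝ) (c : Bool) :
    ((m : ℝ) ≤ x * 2 ^ n ∧ x * 2 ^ n < m + 1) ∧ binDigit n x = c ↔
      (((2 * m + (if c then 1 else 0) : ℤ) : ℝ) ≤ x * 2 ^ (n + 1) ∧
        x * 2 ^ (n + 1) < ((2 * m + (if c then 1 else 0) : ℤ) : ℝ) + 1) := by
  have e : x * 2 ^ (n + 1) = 2 * (x * 2 ^ n) := by ring
  unfold binDigit
  rw [← Int.floor_eq_iff]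
  rw [← Int.floor_eq_iff]
  have h : ⌊x * 2 ^ n⌋ = ⌊x * 2 ^ (n + 1)⌋ / 2 := by
    rw [e]
    set y := x * 2 ^ n
    have h1 := Int.floor_le y
    have h2 := Int.lt_floor_add_one y
    have h3 := Int.floor_le (2 * y)
    have h4 := Int.lt_floor_add_one (2 * y)
    have h5 : 2 * ⌊y⌋ ≤ ⌊2 * y⌋ := by
      rw [Int.le_floor]; push_cast; linarith
    have h6 : ⌊2 * y⌋ < 2 * ⌊y⌋ + 2 := by
      rw [Int.floor_lt]; push_cast; linarith
    omega
  rw [h]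
  cases c <;> simp <;> omega

theorem binDigit_cyl (b : ℕ → Bool) (n : ℕ) : ∃ m : ℤ, ∀ x : ℝ,
    (x ∈ Set.Ico (0 : ℝ) 1 ∧ ∀ i < n, binDigit i x = b i) ↔
      ((m : ℝ) ≤ x * 2 ^ n ∧ x * 2 ^ n < m + 1) := by
  induction n with
  | zero => exact ⟨0, fun x => by simp⟩
  | succ n ih =>
    obtain ⟨m, hm⟩ := ih
    refine ⟨2 * m + (if b n then 1 else 0), fun x => ?_⟩
    rw [← binDigit_step, ← hm, and_assoc, Nat.forall_lt_succ_right]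

theorem measurable_binDigit (n : ℕ) : Measurable (binDigit n) := by
  refine measurable_to_bool ?_
  have e : binDigit n ⁻¹' {true} = (fun x : ℝ => ⌊x * 2 ^ (n + 1)⌋) ⁻¹' {z : ℤ | z % 2 = 1} := by
    ext x; simp [binDigit]
  rw [e]
  have h : Measurable (fun x : ℝ => ⌊x * 2 ^ (n + 1)⌋) := by fun_prop
  exact h (MeasurableSet.of_discrete (s := {z : ℤ | z % 2 = 1}))

/-- The uniform law on `[0,1)`. -/
noncomputable def unif : Measure ℝ := volume.restrict (Set.Ico (0 : ℝ) 1)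

instance : IsProbabilityMeasure unif := ⟨by simp [unif]⟩

/-- Bernoulli law on `Bool`. -/
noncomputable def ber (s : ℝ) : Measure Bool := unif.map (fun u => decide (u < s))

theorem measurable_dec (s : ℝ) : Measurable (fun u : ℝ => decide (u < s)) :=
  measurable_to_bool (by
    have : (fun u : ℝ => decide (u < s)) ⁻¹' {true} = Set.Iio s := by ext; simp
    rw [this]; exact measurableSet_Iio)

instance (s : ℝ) : IsProbabilityMeasure (ber s) :=
  Measure.isProbabilityMeasure_map (measurable_dec s).aemeasurable

theorem ber_true {s : ℝ} (h0 : 0 ≤ s) (h1 : s ≤ 1) : ber s {true} = ENNReal.ofReal s := by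
  rw [ber, Measure.map_apply (measurable_dec s) (by simp), unif,
    Measure.restrict_apply ((measurable_dec s) (by simp))]
  have : (fun u : ℝ => decide (u < s)) ⁻¹' {true} ∩ Set.Ico 0 1 = Set.Ico 0 s := by
    ext u; simp; constructor
    · rintro ⟨a, b, c⟩; exact ⟨b, a⟩
    · rintro ⟨a, b⟩; exact ⟨b, a, by linarith⟩
  rw [this]; simp

theorem ber_false {s : ℝ} (h0 : 0 ≤ s) (h1 : s ≤ 1) : ber s {false} = ENNReal.ofReal (1 - s) := by
  have : ({false} : Set Bool) = {true}ᶜ := by ext b; cases b <;> simp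
  rw [this, prob_compl_eq_one_sub (by simp), ber_true h0 h1, ENNReal.ofReal_sub _ h0]
  simp

theorem eq_ber {μ : Measure Bool} [IsProbabilityMeasure μ] {s : ℝ} (h0 : 0 ≤ s) (h1 : s ≤ 1)
    (h : μ {true} = ENNReal.ofReal s) : μ = ber s := by
  have hc : ({false} : Set Bool) = {true}ᶜ := by ext b; cases b <;> simp
  refine Measure.ext_of_singleton fun b => ?_
  cases b
  · rw [hc, prob_compl_eq_one_sub (by simp), prob_compl_eq_one_sub (by simp), h, ber_true h0 h1]
  · rw [h, ber_true h0 h1]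

/-- Fair coins. -/
noncomputable def coins : Measure (ℕ → Bool) := Measure.infinitePi (fun _ => ber (1 / 2))

theorem ber_half (b : Bool) : ber (1 / 2) {b} = ENNReal.ofReal (1 / 2) := by
  cases b
  · rw [ber_false (by norm_num) (by norm_num)]; norm_num
  · rw [ber_true (by norm_num) (by norm_num)]

theorem measurable_digits : Measurable (fun (x : ℝ) (n : ℕ) => binDigit n x) :=
  measurable_pi_lambda _ measurable_binDigit

theorem digits_law : unif.map (fun x n => binDigit n x) = coins := by
  have key : ∀ n : ℕ, (unif.map (fun x n => binDigit n x)).map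
      (fun (b : ℕ → Bool) (i : Fin n) => b i) =
      coins.map (fun (b : ℕ → Bool) (i : Fin n) => b i) := by
    intro n
    have hr : Measurable (fun (b : ℕ → Bool) (i : Fin n) => b i) := by fun_prop
    have h2 : coins.map (fun (b : ℕ → Bool) (i : Fin n) => b i) =
        Measure.infinitePi (fun _ : Fin n => ber (1 / 2)) :=
      Measure.map_infinitePi_infinitePi_of_inj (P := fun _ : ℕ => ber (1 / 2))
        (f := fun i : Fin n => (i : ℕ)) Fin.val_injective
    rw [h2]
    refine Measure.ext_of_singleton fun b => ?_
    rw [Measure.infinitePi_singleton_of_fintype, Measure.map_map hr measurable_digits,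
      Measure.map_apply (hr.comp measurable_digits) (by simp)]
    simp only [ber_half, Finset.prod_const, Finset.card_univ, Fintype.card_fin]
    obtain ⟨m, hm⟩ := binDigit_cyl (fun i => if h : i < n then b ⟨i, h⟩ else false) n
    rw [unif, Measure.restrict_apply ((hr.comp measurable_digits) (by simp))]
    have : ((fun (b : ℕ → Bool) (i : Fin n) => b i) ∘ fun x n => binDigit n x) ⁻¹' {b} ∩
        Set.Ico 0 1 = Set.Ico ((m : ℝ) / 2 ^ n) ((m + 1) / 2 ^ n) := by
      ext x
      have := hm x
      rw [Set.mem_Ico, div_le_iff₀ (by positivity), lt_div_iff₀ (by positivity), ← this,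
        Set.mem_inter_iff, and_comm]
      refine and_congr_right fun _ => ?_
      simp only [Set.mem_preimage, Set.mem_singleton_iff, funext_iff, Function.comp]
      constructor
      · intro h i hi; simpa [hi] using h ⟨i, hi⟩
      · intro h i; simpa using h i i.2
    rw [this, Real.volume_Ico, ← ENNReal.ofReal_pow (by norm_num)]
    congr 1
    rw [← sub_div, one_div, inv_pow]
    simp
  refine Measure.eq_infinitePi _ fun s t ht => ?_
  obtain ⟨n, hn⟩ : ∃ n : ℕ, ∀ i ∈ s, i < n := by
    refine ⟨s.sup id + 1, fun i hi => Nat.lt_succ_of_le (Finset.le_sup (f := id) hi)⟩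
  have hr : Measurable (fun (b : ℕ → Bool) (i : Fin n) => b i) := by fun_prop
  have hs : Set.pi (s : Set ℕ) t = (fun (b : ℕ → Bool) (i : Fin n) => b i) ⁻¹'
      {c | ∀ i : Fin n, (i : ℕ) ∈ s → c i ∈ t i} := by
    ext b
    simp only [Set.mem_pi, Set.mem_preimage, Set.mem_ofPred_eq, Finset.mem_coe]
    exact ⟨fun h i hi => h i hi, fun h i hi => h ⟨i, hn i hi⟩ hi⟩
  have hm : MeasurableSet {c : Fin n → Bool | ∀ i : Fin n, (i : ℕ) ∈ s → c i ∈ t i} :=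
    MeasurableSet.of_discrete
  rw [hs, ← Measure.map_apply hr hm, key n, Measure.map_apply hr hm, ← hs, coins,
    Measure.infinitePi_pi _ (fun i _ => ht i)]

/-! ### Step 2: the Bernoulli product is the infinite product measure -/

/-- Block maps of product measures. -/
theorem block_law {K ι κ X Y : Type*} [MeasurableSpace X] [MeasurableSpace Y]
    (μ : K → Measure X) [∀ i, IsProbabilityMeasure (μ i)]
    (ρ : ι × κ → K) (hρ : Function.Injective ρ)
    (f : ι → (κ → X) → Y) (hf : ∀ i, Measurable (f i)) :
    (Measure.infinitePi μ).map (fun ω i => f i (fun c => ω (ρ (i, c)))) =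
      Measure.infinitePi (fun i => (Measure.infinitePi (fun c => μ (ρ (i, c)))).map (f i)) := by
  have h1 : (Measure.infinitePi μ).map (fun (ω : K → X) (a : ι × κ) => ω (ρ a)) =
      Measure.infinitePi (fun a => μ (ρ a)) :=
    Measure.map_infinitePi_infinitePi_of_inj hρ
  have h2 := Measure.infinitePi_map_curry (fun i c => μ (ρ (i, c)))
  rw [← Measure.infinitePi_map_pi _ hf, ← h2]
  change _ = ((Measure.infinitePi (fun a => μ (ρ a))).map _).map _
  rw [← h1, Measure.map_map (by fun_prop) (by fun_prop), Measure.map_map (by fun_prop) (by fun_prop)]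
  rfl

/-- Binary expansion. -/
noncomputable def binVal (b : ℕ → Bool) : ℝ :=
  ∑' n : ℕ, if b n then ((2 : ℝ) ^ (n + 1))⁻¹ else 0

theorem binVal_eq (b : ℕ → Bool) :
    binVal b = Real.ofDigits (b := 2) (fun n => if b n then 1 else 0) := by
  unfold binVal Real.ofDigits Real.ofDigitsTerm
  congr 1; ext n
  cases h : b n <;> simp [h]

theorem measurable_binVal : Measurable binVal := by
  have : binVal = Real.ofDigits (b := 2) ∘ (fun b n => if b n then 1 else 0) := by
    ext b; exact binVal_eq b
  rw [this]
  refine Real.continuous_ofDigits.measurable.comp ?_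
  refine measurable_pi_lambda _ fun n => ?_
  exact (measurable_of_countable (fun c : Bool => if c then (1 : Fin 2) else 0)).comp
    (measurable_pi_apply n)

theorem binVal_digits {x : ℝ} (hx : x ∈ Set.Ico (0 : ℝ) 1) :
    binVal (fun n => binDigit n x) = x := by
  rw [binVal_eq]
  conv_rhs => rw [← Real.ofDigits_digits (b := 2) (by norm_num) hx]
  congr 1; ext n
  unfold Real.digits binDigit
  have h : ⌊x * 2 ^ (n + 1)⌋ = (⌊x * 2 ^ (n + 1)⌋₊ : ℤ) :=
    (Int.natCast_floor_eq_floor (by have := hx.1; positivity)).symm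
  rw [h]
  norm_num
  set a := ⌊x * 2 ^ (n + 1)⌋₊
  rcases Nat.mod_two_eq_zero_or_one a with h | h
  · have : ¬ ((a : ℤ) % 2 = 1) := by omega
    simp [this, h]
  · have : ((a : ℤ) % 2 = 1) := by omega
    simp [this, h]

theorem binVal_law : coins.map binVal = unif := by
  rw [← digits_law, Measure.map_map measurable_binVal measurable_digits]
  have : (binVal ∘ fun x n => binDigit n x) =ᵐ[unif] id := by
    rw [unif]
    filter_upwards [ae_restrict_mem measurableSet_Ico] with x hx using binVal_digits hx
  rw [Measure.map_congr this, Measure.map_id]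

theorem bernoulliProduct_eq {ι : Type*} [Encodable ι] (P : ι → ℝ) :
    bernoulliProduct P = Measure.infinitePi (fun i => ber (P i)) := by
  have hf : ∀ i, Measurable (fun b => decide (binVal b < P i)) := fun i =>
    (measurable_dec (P i)).comp measurable_binVal
  have h := block_law (fun _ : ℕ => ber (1 / 2))
    (fun a : ι × ℕ => Nat.pair (Encodable.encode a.1) a.2)
    (by
      rintro ⟨i, n⟩ ⟨j, m⟩ h
      have := Nat.pair_eq_pair.1 h
      simpa using this)
    (fun i b => decide (binVal b < P i)) hf
  have e : ∀ i, (Measure.infinitePi (fun _ : ℕ => ber (1 / 2))).map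
      (fun b => decide (binVal b < P i)) = ber (P i) := by
    intro i
    have h2 : ber (P i) = (coins.map binVal).map (fun u => decide (u < P i)) := by
      rw [binVal_law]; rfl
    rw [h2, Measure.map_map (measurable_dec _) measurable_binVal]
    rfl
  simp only [e] at h
  rw [← h]
  change _ = coins.map _
  rw [← digits_law, Measure.map_map _ measurable_digits]
  · rfl
  · refine measurable_pi_lambda _ fun i => (hf i).comp ?_
    fun_prop

/-! ### Step 3: the coupling -/

/-- Indices of the refined configuration: each bond carries four copies. -/
abbrev FineIdx : Type := EdgeIdx × Fin 4

/-- Opening probabilities of the copies. -/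
noncomputable def fineProb (p q : ℝ) (a : FineIdx) : ℝ := if a.1.2 = 2 then qhat q else p

/-- Local rule producing the slab configuration. -/
def slabRule (e : EdgeIdx) (b : Fin 4 → Bool) : Bool :=
  if e.2 = 2 then decide (∃ c, b c = true) else b 0

/-- The block of fine indices attached to a bond of `ℤ²`. -/
def blockIdx (a : ((ℤ × ℤ) × Fin 2) × (ℕ × Fin 3)) : FineIdx :=
  if a.2.2 = 0 then (((a.1.1.1, a.1.1.2, (a.2.1 : ℤ)), a.1.2.castSucc), 0)
  else if a.2.2 = 1 then
    (((a.1.1.1, a.1.1.2, (a.2.1 : ℤ)), 2), if a.1.2 = 0 then 0 else 1)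
  else
    ((((a.1.1 + dvec2 a.1.2).1, (a.1.1 + dvec2 a.1.2).2, (a.2.1 : ℤ)), 2),
      if a.1.2 = 0 then 2 else 3)

theorem blockIdx_injective : Function.Injective blockIdx := by
  rintro ⟨⟨⟨x, y⟩, i⟩, ⟨j, c⟩⟩ ⟨⟨⟨x₂, y₂⟩, i₂⟩, ⟨j₂, c₂⟩⟩ h
  fin_cases i <;> fin_cases i₂ <;> fin_cases c <;> fin_cases c₂ <;>
    simp [blockIdx, dvec2] at h ⊢ <;> tauto

/-- The first-rung event at height `j`. -/
def Rung (j : ℕ) (b : ℕ × Fin 3 → Bool) : Prop :=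
  (∀ l < j, b (l, 0) = false ∧ b (l, 1) = true ∧ b (l, 2) = true) ∧ b (j, 0) = true

open Classical in
/-- Local rule producing the `ℤ²` configuration. -/
noncomputable def ladderRule (k : ℕ) (b : ℕ × Fin 3 → Bool) : Bool :=
  decide (∃ j ∈ Finset.range (k + 1), Rung j b)

/-- Sides of the box describing `Rung j`. -/
def rungBox (j : ℕ) (a : ℕ × Fin 3) : Set Bool :=
  if a.1 < j then (if a.2 = 0 then {false} else {true}) else {true}

/-- Support of the box describing `Rung j`. -/
def rungSupp (j : ℕ) : Finset (ℕ × Fin 3) :=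
  insert (j, 0) (Finset.range j ×ˢ Finset.univ)

theorem rung_eq_pi (j : ℕ) : {b | Rung j b} = Set.pi (rungSupp j) (rungBox j) := by
  ext b
  simp only [Set.mem_ofPred_eq, Rung, Set.mem_pi, rungSupp, Finset.coe_insert, Set.mem_insert_iff]
  constructor
  · rintro ⟨h1, h2⟩ ⟨l, c⟩ (h | h)
    · obtain ⟨rfl, rfl⟩ := Prod.mk.inj h
      simpa [rungBox] using h2
    · have hl : l < j := by simpa using h
      have := h1 l hl
      fin_cases c <;> simp [rungBox, hl, this]
  · intro h
    refine ⟨fun l hl => ⟨?_, ?_, ?_⟩, ?_⟩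
    · simpa [rungBox, hl] using h (l, 0) (Or.inr (by simpa using hl))
    · simpa [rungBox, hl] using h (l, 1) (Or.inr (by simpa using hl))
    · simpa [rungBox, hl] using h (l, 2) (Or.inr (by simpa using hl))
    · simpa [rungBox] using h (j, 0) (Or.inl rfl)

theorem measurableSet_rung (j : ℕ) : MeasurableSet {b | Rung j b} := by
  rw [rung_eq_pi]
  exact MeasurableSet.pi (Finset.countable_toSet _) fun _ _ => MeasurableSet.of_discrete

theorem rung_disjoint {i j : ℕ} (hij : i ≠ j) : Disjoint {b | Rung i b} {b | Rung j b} := by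
  rw [Set.disjoint_left]
  rintro b ⟨h1, h2⟩ ⟨h3, h4⟩
  rcases lt_or_gt_of_ne hij with h | h
  · have := (h3 i h).1; simp [h2] at this
  · have := (h1 j h).1; simp [h4] at this

theorem ladder_preimage (k : ℕ) : ladderRule k ⁻¹' {true} =
    ⋃ j ∈ Finset.range (k + 1), {b | Rung j b} := by
  ext b
  simp [ladderRule]

theorem measurable_ladderRule (k : ℕ) : Measurable (ladderRule k) := by
  refine measurable_to_bool ?_
  rw [ladder_preimage]
  exact Finset.measurableSet_biUnion _ fun j _ => measurableSet_rung j

theorem qhat_mem {q : ℝ} (hq : q ∈ Set.Icc (0 : ℝ) 1) : 0 ≤ qhat q ∧ qhat q ≤ 1 := by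
  have h0 : 0 ≤ 1 - q := by linarith [hq.2]
  have h1 : (1 - q) ^ ((1 : ℝ) / 4) ≤ 1 :=
    Real.rpow_le_one h0 (by linarith [hq.1]) (by norm_num)
  have h2 : 0 ≤ (1 - q) ^ ((1 : ℝ) / 4) := Real.rpow_nonneg h0 _
  unfold qhat
  constructor <;> linarith

theorem qhat_pow {q : ℝ} (hq : q ∈ Set.Icc (0 : ℝ) 1) : (1 - qhat q) ^ 4 = 1 - q := by
  have h0 : 0 ≤ 1 - q := by linarith [hq.2]
  unfold qhat
  rw [sub_sub_cancel, ← Real.rpow_natCast, ← Real.rpow_mul h0]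
  norm_num

theorem rung_prob {p r : ℝ} (hp : 0 ≤ p ∧ p ≤ 1) (hr : 0 ≤ r ∧ r ≤ 1) (j : ℕ) :
    Measure.infinitePi (fun a : ℕ × Fin 3 => ber (if a.2 = 0 then p else r)) {b | Rung j b} =
      ENNReal.ofReal (p * ((1 - p) * r ^ 2) ^ j) := by
  have h1p : 0 ≤ 1 - p := by linarith [hp.2]
  rw [rung_eq_pi, Measure.infinitePi_pi _ (fun _ _ => MeasurableSet.of_discrete), rungSupp,
    Finset.prod_insert (by simp), Finset.prod_product]
  have h : ∀ l ∈ Finset.range j, ∏ c : Fin 3, ber (if c = 0 then p else r) (rungBox j (l, c)) =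
      ENNReal.ofReal ((1 - p) * r ^ 2) := by
    intro l hl
    have hl' : l < j := by simpa using hl
    simp [Fin.prod_univ_three, rungBox, hl', ber_false hp.1 hp.2, ber_true hr.1 hr.2]
    rw [ENNReal.ofReal_mul h1p, pow_two, ENNReal.ofReal_mul hr.1, mul_assoc]
  rw [Finset.prod_congr rfl h]
  have h0 := hp.1
  have h2 := hr.1
  simp only [Finset.prod_const, Finset.card_range]
  rw [ENNReal.ofReal_mul hp.1, ENNReal.ofReal_pow (by positivity)]
  simp [rungBox, ber_true hp.1 hp.2]

theorem sum_eq_pbar (k : ℕ) {p q : ℝ} (hp : p ∈ Set.Icc (0 : ℝ) 1)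
    (hq : q ∈ Set.Icc (0 : ℝ) 1) :
    ∑ j ∈ Finset.range (k + 1), p * ((1 - p) * qhat q ^ 2) ^ j = pbar k p q := by
  rw [← Finset.mul_sum, pbar]
  by_cases h : (1 - p) * qhat q ^ 2 = 1
  · have hr := qhat_mem hq
    have h1 : qhat q ^ 2 ≤ 1 := pow_le_one₀ hr.1 hr.2
    have hp0 : p = 0 := by nlinarith [hp.1, hp.2, sq_nonneg (qhat q)]
    simp [hp0]
  · rw [geom_sum_eq h, mul_div_assoc, ← neg_div_neg_eq, neg_sub, neg_sub]

theorem ladder_law {k : ℕ} {p q : ℝ} (hp : p ∈ Set.Icc (0 : ℝ) 1) (hq : q ∈ Set.Icc (0 : ℝ) 1) :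
    (Measure.infinitePi (fun a : ℕ × Fin 3 => ber (if a.2 = 0 then p else qhat q))).map
      (ladderRule k) = ber (pbar k p q) := by
  have hr := qhat_mem hq
  have h1p : 0 ≤ 1 - p := by linarith [hp.2]
  have h0 := hp.1
  have h2 := hr.1
  have := Measure.isProbabilityMeasure_map
    (μ := Measure.infinitePi (fun a : ℕ × Fin 3 => ber (if a.2 = 0 then p else qhat q)))
    (measurable_ladderRule k).aemeasurable
  have key : (Measure.infinitePi (fun a : ℕ × Fin 3 => ber (if a.2 = 0 then p else qhat q))).map
      (ladderRule k) {true} = ENNReal.ofReal (pbar k p q) := by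
    rw [Measure.map_apply (measurable_ladderRule k) (by simp), ladder_preimage,
      measure_biUnion_finset (fun i _ j _ hij => rung_disjoint hij)
        (fun j _ => measurableSet_rung j)]
    simp only [rung_prob hp hr]
    rw [← ENNReal.ofReal_sum_of_nonneg (fun _ _ => by positivity), sum_eq_pbar k hp hq]
  refine eq_ber ?_ ?_ key
  · rw [← sum_eq_pbar k hp hq]
    exact Finset.sum_nonneg fun _ _ => by positivity
  · rw [← ENNReal.ofReal_le_one, ← key]
    exact prob_le_one

theorem slabRule_law {p q : ℝ} (hq : q ∈ Set.Icc (0 : ℝ) 1)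
    (e : EdgeIdx) :
    (Measure.infinitePi (fun c : Fin 4 => ber (fineProb p q (e, c)))).map (slabRule e) =
      ber (if e.2 = 2 then q else p) := by
  have hr := qhat_mem hq
  by_cases h : e.2 = 2
  · have hm : Measurable (slabRule e) := measurable_of_countable _
    have := Measure.isProbabilityMeasure_map
      (μ := Measure.infinitePi (fun c : Fin 4 => ber (fineProb p q (e, c)))) hm.aemeasurable
    rw [if_pos h]
    refine eq_ber hq.1 hq.2 ?_
    rw [Measure.map_apply hm (by simp)]
    have e1 : slabRule e ⁻¹' {true} = {fun _ => false}ᶜ := by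
      ext b
      simp [slabRule, h, funext_iff]
    rw [e1, prob_compl_eq_one_sub (by simp), Measure.infinitePi_singleton_of_fintype]
    have e2 : ∀ c : Fin 4, ber (fineProb p q (e, c)) {false} = ENNReal.ofReal (1 - qhat q) := by
      intro c
      rw [fineProb, if_pos h, ber_false hr.1 hr.2]
    simp only [e2, Finset.prod_const, Finset.card_univ, Fintype.card_fin]
    rw [← ENNReal.ofReal_pow (by linarith), qhat_pow hq, ENNReal.ofReal_sub _ hq.1,
      ENNReal.ofReal_one, ENNReal.sub_sub_cancel (by simp) (by simpa using hq.2)]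
  · have e1 : slabRule e = fun b => b 0 := by ext b; simp [slabRule, h]
    rw [e1, Measure.infinitePi_map_eval, fineProb]
    simp [h]

/-- The law of the refined configuration. -/
noncomputable def fineMeasure (p q : ℝ) : Measure (FineIdx → Bool) :=
  Measure.infinitePi (fun a => ber (fineProb p q a))

/-- The slab configuration. -/
def toSlab (η : FineIdx → Bool) : Config := fun e => slabRule e (fun c => η (e, c))

/-- The `ℤ²` configuration. -/
noncomputable def toZ2 (k : ℕ) (η : FineIdx → Bool) : ConfigZ2 :=
  fun e => ladderRule k (fun c => η (blockIdx (e, c)))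

theorem toSlab_law {k : ℕ} {p q : ℝ} (hq : q ∈ Set.Icc (0 : ℝ) 1) :
    (fineMeasure p q).map toSlab = slabMeasure k p q := by
  have h := block_law (fun a => ber (fineProb p q a)) id Function.injective_id slabRule
    (fun e => measurable_of_countable _)
  rw [slabMeasure, bernoulliProduct_eq]
  simp only [id, slabRule_law hq] at h
  exact h

theorem toZ2_law {k : ℕ} {p q : ℝ} (hp : p ∈ Set.Icc (0 : ℝ) 1) (hq : q ∈ Set.Icc (0 : ℝ) 1) :
    (fineMeasure p q).map (toZ2 k) = z2Measure (pbar k p q) := by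
  have h := block_law (fun a => ber (fineProb p q a)) blockIdx blockIdx_injective
    (fun _ => ladderRule k) (fun _ => measurable_ladderRule k)
  have e : ∀ (i : (ℤ × ℤ) × Fin 2) (c : ℕ × Fin 3), fineProb p q (blockIdx (i, c)) =
      if c.2 = 0 then p else qhat q := by
    rintro ⟨x, i⟩ ⟨j, c⟩
    fin_cases i <;> fin_cases c <;> simp [fineProb, blockIdx]
  rw [z2Measure, bernoulliProduct_eq]
  simp only [e, ladder_law hp hq] at h
  exact h

theorem measurable_toSlab : Measurable toSlab := by
  refine measurable_pi_lambda _ fun e => ?_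
  exact (measurable_of_countable (slabRule e)).comp (by fun_prop)

theorem measurable_toZ2 (k : ℕ) : Measurable (toZ2 k) := by
  refine measurable_pi_lambda _ fun e => ?_
  exact (measurable_ladderRule k).comp (by fun_prop)

/-! ### Step 4: the deterministic comparison -/

theorem OpenAdj.symm' {k : ℕ} {ω : Config} {x y : Vtx} (h : OpenAdj k ω x y) :
    OpenAdj k ω y x := by
  obtain ⟨i, h⟩ := h
  exact ⟨i, h.symm⟩

theorem climb {k : ℕ} {ω : Config} {a b : ℤ} (j : ℕ) (hj : j ≤ k)
    (h : ∀ l < j, ω ((a, b, (l : ℤ)), 2) = true) :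
    Relation.ReflTransGen (OpenAdj k ω) (a, b, 0) (a, b, (j : ℤ)) := by
  induction j with
  | zero => exact Relation.ReflTransGen.refl
  | succ j ih =>
    refine (ih (by omega) fun l hl => h l (by omega)).tail ⟨2, Or.inl ⟨?_, ?_, h j (by omega)⟩⟩
    · simp [dvec]
    · simp [IsEdge, InSlab, dvec]; omega

theorem reach_symm {k : ℕ} {ω : Config} {x y : Vtx}
    (h : Relation.ReflTransGen (OpenAdj k ω) x y) : Relation.ReflTransGen (OpenAdj k ω) y x := by
  induction h with
  | refl => exact Relation.ReflTransGen.refl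
  | tail _ h ih => exact Relation.ReflTransGen.head h.symm' ih

theorem edge_lift {k : ℕ} {η : FineIdx → Bool} {x : ℤ × ℤ} {i : Fin 2}
    (h : toZ2 k η (x, i) = true) :
    Relation.ReflTransGen (OpenAdj k (toSlab η)) (x.1, x.2, 0)
      ((x + dvec2 i).1, (x + dvec2 i).2, 0) := by
  obtain ⟨j, hj, hl, hr⟩ : ∃ j ∈ Finset.range (k + 1),
      Rung j (fun c => η (blockIdx ((x, i), c))) := by
    simpa only [toZ2, ladderRule, decide_eq_true_eq] using h
  have hjk : j ≤ k := by have := Finset.mem_range.1 hj; omega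
  have h1 : Relation.ReflTransGen (OpenAdj k (toSlab η)) (x.1, x.2, 0) (x.1, x.2, (j : ℤ)) := by
    refine climb j hjk fun l hlj => ?_
    have := (hl l hlj).2.1
    simp only [toSlab, slabRule, if_true, decide_eq_true_eq]
    exact ⟨if i = 0 then 0 else 1, by simpa [blockIdx] using this⟩
  have h2 : Relation.ReflTransGen (OpenAdj k (toSlab η)) ((x + dvec2 i).1, (x + dvec2 i).2, 0)
      ((x + dvec2 i).1, (x + dvec2 i).2, (j : ℤ)) := by
    refine climb j hjk fun l hlj => ?_
    have := (hl l hlj).2.2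
    simp only [toSlab, slabRule, if_true, decide_eq_true_eq]
    exact ⟨if i = 0 then 2 else 3, by simpa [blockIdx] using this⟩
  refine (h1.tail ⟨i.castSucc, Or.inl ⟨?_, ?_, ?_⟩⟩).trans (reach_symm h2)
  · fin_cases i <;> simp [dvec, dvec2]
  · fin_cases i <;> simp [IsEdge, InSlab, dvec] <;> omega
  · fin_cases i <;> simpa [toSlab, slabRule, blockIdx] using hr

theorem reach_lift {k : ℕ} {η : FineIdx → Bool} {x y : ℤ × ℤ}
    (h : Relation.ReflTransGen (OpenAdjZ2 (toZ2 k η)) x y) :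
    Relation.ReflTransGen (OpenAdj k (toSlab η)) (x.1, x.2, 0) (y.1, y.2, 0) := by
  induction h with
  | refl => exact Relation.ReflTransGen.refl
  | tail _ h ih =>
    refine ih.trans ?_
    obtain ⟨i, ⟨rfl, h⟩ | ⟨rfl, h⟩⟩ := h
    · exact edge_lift h
    · exact reach_symm (edge_lift h)

theorem infinite_lift {k : ℕ} {η : FineIdx → Bool} (h : (clusterZ2 (toZ2 k η) 0).Infinite) :
    (cluster k (toSlab η) 0).Infinite := by
  have hinj : Function.Injective (fun x : ℤ × ℤ => ((x.1, x.2, 0) : Vtx)) := by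
    rintro ⟨a, b⟩ ⟨c, d⟩ h
    simpa using h
  refine (h.image hinj.injOn).mono ?_
  rintro _ ⟨y, hy, rfl⟩
  exact reach_lift hy

/-! ### Step 5: measurability of the `ℤ²` percolation event -/

theorem measurableSet_ex {Ω ι : Type*} [MeasurableSpace Ω] [Countable ι] {P : ι → Ω → Prop}
    (h : ∀ i, MeasurableSet {ω | P i ω}) : MeasurableSet {ω | ∃ i, P i ω} := by
  have : {ω | ∃ i, P i ω} = ⋃ i, {ω | P i ω} := by ext; simp
  rw [this]
  exact MeasurableSet.iUnion h

theorem measurableSet_all {Ω ι : Type*} [MeasurableSpace Ω] [Countable ι] {P : ι → Ω → Prop}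
    (h : ∀ i, MeasurableSet {ω | P i ω}) : MeasurableSet {ω | ∀ i, P i ω} := by
  have : {ω | ∀ i, P i ω} = ⋂ i, {ω | P i ω} := by ext; simp
  rw [this]
  exact MeasurableSet.iInter h

theorem measurableSet_adj (x y : ℤ × ℤ) : MeasurableSet {ω : ConfigZ2 | OpenAdjZ2 ω x y} := by
  have he : ∀ e : (ℤ × ℤ) × Fin 2, MeasurableSet {ω : ConfigZ2 | ω e = true} := by
    intro e
    have hm : Measurable (fun ω : ConfigZ2 => ω e) := measurable_pi_apply e
    exact hm (MeasurableSet.of_discrete (s := {true}))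
  unfold OpenAdjZ2
  refine measurableSet_ex fun i => ?_
  exact ((MeasurableSet.const _).inter (he _)).union ((MeasurableSet.const _).inter (he _))

/-- Reachability in `n` steps. -/
def stepReach (ω : ConfigZ2) : ℕ → ℤ × ℤ → Prop
  | 0, y => y = 0
  | n + 1, y => ∃ z, stepReach ω n z ∧ OpenAdjZ2 ω z y

theorem measurableSet_stepReach (n : ℕ) (y : ℤ × ℤ) :
    MeasurableSet {ω : ConfigZ2 | stepReach ω n y} := by
  induction n generalizing y with
  | zero => exact MeasurableSet.const _
  | succ n ih =>
    unfold stepReach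
    exact measurableSet_ex fun z => (ih z).inter (measurableSet_adj z y)

theorem mem_cluster_iff (ω : ConfigZ2) (y : ℤ × ℤ) :
    y ∈ clusterZ2 ω 0 ↔ ∃ n, stepReach ω n y := by
  constructor
  · intro h
    change Relation.ReflTransGen _ _ _ at h
    induction h with
    | refl => exact ⟨0, rfl⟩
    | tail _ h ih =>
      obtain ⟨n, hn⟩ := ih
      exact ⟨n + 1, _, hn, h⟩
  · rintro ⟨n, hn⟩
    induction n generalizing y with
    | zero => cases hn; exact Relation.ReflTransGen.refl
    | succ n ih =>
      obtain ⟨z, hz, h⟩ := hn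
      exact Relation.ReflTransGen.tail (ih z hz) h

theorem measurableSet_infinite : MeasurableSet {ω : ConfigZ2 | (clusterZ2 ω 0).Infinite} := by
  have : {ω : ConfigZ2 | (clusterZ2 ω 0).Infinite} =
      {ω | ∀ s : Finset (ℤ × ℤ), ∃ y, y ∉ s ∧ ∃ n, stepReach ω n y} := by
    ext ω
    simp only [Set.mem_ofPred_eq, ← mem_cluster_iff]
    constructor
    · intro h s
      obtain ⟨y, hy, hs⟩ := h.exists_notMem_finset s
      exact ⟨y, hs, hy⟩
    · intro h hf
      obtain ⟨y, hy, hy'⟩ := h hf.toFinset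
      exact hy (by simpa using hy')
  rw [this]
  refine measurableSet_all fun s => measurableSet_ex fun y => ?_
  exact (MeasurableSet.const _).inter (measurableSet_ex fun n => measurableSet_stepReach n y)

/-- The slab percolation function dominates the `ℤ²` percolation function at
the renormalized parameter: `θ^{S^k}(p,q) ≥ θ^{ℤ²}(p̄(p,q))`. -/
theorem theta_ge_thetaZ2_pbar (k : ℕ) (p q : ℝ)
    (hp : p ∈ Set.Icc (0 : ℝ) 1) (hq : q ∈ Set.Icc (0 : ℝ) 1) :
    thetaZ2 (pbar k p q) ≤ theta k p q := by
  rw [thetaZ2, theta, ← toZ2_law hp hq, ← toSlab_law hq,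
    Measure.map_apply (measurable_toZ2 k) measurableSet_infinite]
  refine le_trans (measure_mono ?_) (Measure.le_map_apply measurable_toSlab.aemeasurable _)
  intro η hη
  exact infinite_lift hη

end AnisoSlab
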